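/- Let m₁, m₂ ∈ ℂ with m₁, m₂ and m₁+m₂ all nonzero. Then the ℂ-subalgebra of ℂ[x₁,x₂] generated by all weighted power sums p_j := m₁x₁ʲ + m₂x₂ʲ for j ≥ 1 equals the ℂ-subalgebra generated by the three elements m₁x₁ + m₂x₂, (x₁ − x₂)², and (m₁ − m₂)(x₁ − x₂)³. -/

import Mathlib

open MvPolynomial

/-!
Let `M` be the total weight and `p₁` the first power sum, and replace each `xᵢ` by its deviation
`M xᵢ - p₁` from the weighted mean. By the binomial theorem `Mʲ pⱼ` is a polynomial in `p₁` and the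
power sums of the deviations. For two variables the deviations are `m₂ (x₁ - x₂)` and
`-m₁ (x₁ - x₂)`, so their `k`-th power sum is a multiple of `(x₁ - x₂)ᵏ`, whose coefficient vanishes
for `k = 1` and is divisible by `m₁ - m₂` for all odd `k`. Conversely, `(x₁ - x₂)²` and
`(m₁ - m₂) (x₁ - x₂)³` are polynomials in `p₁`, `p₂`, `p₃`, up to the factor `m₁ m₂`.
-/

section WeightedPsum

variable {ι R A : Type*} [Fintype ι]

/-- The weighted power sum `∑ i, mᵢ xᵢʲ` of elements `xᵢ` of an `R`-algebra with weights `mᵢ`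
in `R`. -/
def weightedPsum [CommSemiring R] [CommSemiring A] [Algebra R A] (m : ι → R) (x : ι → A)
    (j : ℕ) : A :=
  ∑ i, m i • x i ^ j

theorem weightedPsum_smul [CommSemiring R] [CommSemiring A] [Algebra R A] (m : ι → R) (r : R)
    (x : ι → A) (j : ℕ) : weightedPsum m (r • x) j = r ^ j • weightedPsum m x j := by
  simp only [weightedPsum, Pi.smul_apply, smul_pow, Finset.smul_sum, smul_comm (r ^ j)]

theorem weightedPsum_add_const [CommSemiring R] [CommSemiring A] [Algebra R A] (m : ι → R)
    (x : ι → A) (c : A) (j : ℕ) :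
    weightedPsum m (fun i ↦ x i + c) j =
      ∑ k ∈ Finset.range (j + 1), weightedPsum m x k * c ^ (j - k) * j.choose k := by
  simp only [weightedPsum, add_pow, Finset.smul_sum, Finset.sum_mul, smul_mul_assoc]
  exact Finset.sum_comm

variable [CommRing R] [CommRing A] [Algebra R A]

/-- The deviation of each `xᵢ` from the weighted mean, multiplied by the total weight so that
no division is needed. -/
def weightedDeviation (m : ι → R) (x : ι → A) (i : ι) : A :=
  (∑ i', m i') • x i - weightedPsum m x 1

theorem sum_pow_smul_weightedPsum (m : ι → R) (x : ι → A) (j : ℕ) :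
    (∑ i, m i) ^ j • weightedPsum m x j =
      ∑ k ∈ Finset.range (j + 1),
        weightedPsum m (weightedDeviation m x) k * weightedPsum m x 1 ^ (j - k) * j.choose k := by
  rw [← weightedPsum_smul, ← weightedPsum_add_const]
  simp only [weightedDeviation, sub_add_cancel, Pi.smul_def]

theorem weightedPsum_mem_of_weightedDeviation {m : ι → R} {x : ι → A} {S : Subalgebra R A}
    (hm : IsUnit (∑ i, m i)) (hp₁ : weightedPsum m x 1 ∈ S)
    (hdev : ∀ k, weightedPsum m (weightedDeviation m x) k ∈ S) (j : ℕ) :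
    weightedPsum m x j ∈ S := by
  refine (S.toSubmodule.smul_mem_iff_of_isUnit (hm.pow j)).1 ?_
  rw [sum_pow_smul_weightedPsum]
  exact S.sum_mem fun k _ ↦
    S.mul_mem (S.mul_mem (hdev k) (S.pow_mem hp₁ _)) (natCast_mem S _)

end WeightedPsum

theorem sub_dvd_mul_pow_add_mul_neg_pow {R : Type*} [CommRing R] (a b : R) {k : ℕ} (hk : Odd k) :
    a - b ∣ a * b ^ k + b * (-a) ^ k := by
  obtain ⟨n, rfl⟩ := hk
  have factored : a * b ^ (2 * n + 1) + b * (-a) ^ (2 * n + 1) =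
      a * b * (b ^ (2 * n) - a ^ (2 * n)) := by
    rw [Odd.neg_pow ⟨n, rfl⟩]
    ring
  rw [factored]
  exact (dvd_sub_comm.1 (sub_dvd_pow_sub_pow a b _)).mul_left _

section TwoVariables

variable {R A : Type*} [CommRing R] [CommRing A] [Algebra R A] {m₁ m₂ : R} {x y : A}
  {S : Subalgebra R A}

theorem weightedPsum_pair (m₁ m₂ : R) (x y : A) (j : ℕ) :
    weightedPsum ![m₁, m₂] ![x, y] j = m₁ • x ^ j + m₂ • y ^ j :=
  Fin.sum_univ_two _

theorem weightedDeviation_pair (m₁ m₂ : R) (x y : A) :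
    weightedDeviation ![m₁, m₂] ![x, y] = ![m₂ • (x - y), -m₁ • (x - y)] := by
  refine funext (Fin.forall_fin_two.2 ⟨?_, ?_⟩) <;>
  · simp only [weightedDeviation, weightedPsum_pair, Fin.sum_univ_two, Matrix.cons_val_zero,
      Matrix.cons_val_one, pow_one]
    module

theorem weightedPsum_weightedDeviation_pair (m₁ m₂ : R) (x y : A) (k : ℕ) :
    weightedPsum ![m₁, m₂] (weightedDeviation ![m₁, m₂] ![x, y]) k =
      (m₁ * m₂ ^ k + m₂ * (-m₁) ^ k) • (x - y) ^ k := by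
  rw [weightedDeviation_pair, weightedPsum_pair, smul_pow, smul_pow, smul_smul, smul_smul, add_smul]

theorem smul_pow_two_mul_add_three_mem {a : R} {d : A} (hsq : d ^ 2 ∈ S) (hcube : a • d ^ 3 ∈ S)
    (n : ℕ) : a • d ^ (2 * n + 3) ∈ S := by
  rw [add_comm, pow_add, pow_mul, ← smul_mul_assoc]
  exact S.mul_mem hcube (S.pow_mem hsq n)

theorem weightedPsum_weightedDeviation_pair_mem (hsq : (x - y) ^ 2 ∈ S)
    (hcube : (m₁ - m₂) • (x - y) ^ 3 ∈ S) (k : ℕ) :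
    weightedPsum ![m₁, m₂] (weightedDeviation ![m₁, m₂] ![x, y]) k ∈ S := by
  rw [weightedPsum_weightedDeviation_pair]
  obtain ⟨n, rfl | rfl⟩ := k.even_or_odd'
  · rw [pow_mul (x - y)]
    exact S.smul_mem (S.pow_mem hsq n) _
  obtain _ | n := n
  · have first_moment : m₁ * m₂ ^ (2 * 0 + 1) + m₂ * (-m₁) ^ (2 * 0 + 1) = 0 := by ring
    rw [first_moment, zero_smul]
    exact S.zero_mem
  · obtain ⟨c, hc⟩ := sub_dvd_mul_pow_add_mul_neg_pow m₁ m₂ (odd_two_mul_add_one (n + 1))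
    rw [hc, mul_comm, mul_smul]
    exact S.smul_mem (smul_pow_two_mul_add_three_mem hsq hcube n) c

theorem smul_pow_add_smul_pow_mem (hm : IsUnit (m₁ + m₂)) (hp₁ : m₁ • x + m₂ • y ∈ S)
    (hsq : (x - y) ^ 2 ∈ S) (hcube : (m₁ - m₂) • (x - y) ^ 3 ∈ S) (j : ℕ) :
    m₁ • x ^ j + m₂ • y ^ j ∈ S := by
  rw [← weightedPsum_pair]
  refine weightedPsum_mem_of_weightedDeviation ?_ ?_
    (weightedPsum_weightedDeviation_pair_mem hsq hcube) j
  · rwa [Fin.sum_univ_two]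
  · simpa only [weightedPsum_pair, pow_one] using hp₁

theorem sub_sq_mem_of_smul_pow_add_smul_pow_mem (hm : IsUnit (m₁ * m₂))
    (hp₁ : m₁ • x + m₂ • y ∈ S) (hp₂ : m₁ • x ^ 2 + m₂ • y ^ 2 ∈ S) : (x - y) ^ 2 ∈ S := by
  have variance : (m₁ * m₂) • (x - y) ^ 2 =
      (m₁ + m₂) • (m₁ • x ^ 2 + m₂ • y ^ 2) - (m₁ • x + m₂ • y) ^ 2 := by algebra
  refine (S.toSubmodule.smul_mem_iff_of_isUnit hm).1 ?_
  rw [variance]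
  exact S.sub_mem (S.smul_mem hp₂ _) (S.pow_mem hp₁ 2)

theorem smul_sub_cube_mem_of_smul_pow_add_smul_pow_mem (hm : IsUnit (m₁ * m₂))
    (hp₁ : m₁ • x + m₂ • y ∈ S) (hsq : (x - y) ^ 2 ∈ S) (hp₃ : m₁ • x ^ 3 + m₂ • y ^ 3 ∈ S) :
    (m₁ - m₂) • (x - y) ^ 3 ∈ S := by
  have third_moment : (m₁ * m₂) • (m₁ - m₂) • (x - y) ^ 3 =
      (m₁ • x + m₂ • y) ^ 3 + (3 * (m₁ * m₂)) • ((m₁ • x + m₂ • y) * (x - y) ^ 2)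
        - (m₁ + m₂) ^ 2 • (m₁ • x ^ 3 + m₂ • y ^ 3) := by algebra
  refine (S.toSubmodule.smul_mem_iff_of_isUnit hm).1 ?_
  rw [third_moment]
  exact S.sub_mem (S.add_mem (S.pow_mem hp₁ 3) (S.smul_mem (S.mul_mem hp₁ hsq) _))
    (S.smul_mem hp₃ _)

theorem stmt_18_general (h₁ : IsUnit m₁) (h₂ : IsUnit m₂) (h₁₂ : IsUnit (m₁ + m₂)) (x y : A) :
    Algebra.adjoin R {f : A | ∃ j : ℕ, 1 ≤ j ∧ f = m₁ • x ^ j + m₂ • y ^ j} =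
      Algebra.adjoin R {m₁ • x + m₂ • y, (x - y) ^ 2, (m₁ - m₂) • (x - y) ^ 3} := by
  apply le_antisymm <;> apply Algebra.adjoin_le
  · rintro _ ⟨j, -, rfl⟩
    apply smul_pow_add_smul_pow_mem h₁₂ <;> exact Algebra.subset_adjoin (by simp)
  · set S := Algebra.adjoin R {f : A | ∃ j : ℕ, 1 ≤ j ∧ f = m₁ • x ^ j + m₂ • y ^ j}
    have hp (j : ℕ) (hj : 1 ≤ j) : m₁ • x ^ j + m₂ • y ^ j ∈ S :=
      Algebra.subset_adjoin ⟨j, hj, rfl⟩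
    have hp₁ : m₁ • x + m₂ • y ∈ S := by simpa only [pow_one] using hp 1 le_rfl
    have hsq : (x - y) ^ 2 ∈ S :=
      sub_sq_mem_of_smul_pow_add_smul_pow_mem (h₁.mul h₂) hp₁ (hp 2 (by decide))
    have hcube : (m₁ - m₂) • (x - y) ^ 3 ∈ S :=
      smul_sub_cube_mem_of_smul_pow_add_smul_pow_mem (h₁.mul h₂) hp₁ hsq (hp 3 (by decide))
    rintro _ (rfl | rfl | rfl)
    exacts [hp₁, hsq, hcube]

end TwoVariables

/-- Let `m₁, m₂ ∈ ℂ` with `m₁, m₂, m₁+m₂` all nonzero.  Then the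
`ℂ`-subalgebra of `ℂ[x₁,x₂]` generated by all weighted power sums
`p_j := m₁x₁ʲ + m₂x₂ʲ` (`j ≥ 1`) equals the `ℂ`-subalgebra generated by
`m₁x₁ + m₂x₂`, `(x₁ − x₂)²`, and `(m₁ − m₂)(x₁ − x₂)³`. -/
theorem stmt_18 (m₁ m₂ : ℂ) (h₁ : m₁ ≠ 0) (h₂ : m₂ ≠ 0) (h₁₂ : m₁ + m₂ ≠ 0) :
    Algebra.adjoin ℂ
        {f : MvPolynomial (Fin 2) ℂ |
          ∃ j : ℕ, 1 ≤ j ∧ f = C m₁ * X 0 ^ j + C m₂ * X 1 ^ j}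
      = Algebra.adjoin ℂ
          ({C m₁ * X 0 + C m₂ * X 1, (X 0 - X 1) ^ 2,
            C (m₁ - m₂) * (X 0 - X 1) ^ 3} : Set (MvPolynomial (Fin 2) ℂ)) := by
  simpa only [smul_eq_C_mul] using
    stmt_18_general h₁.isUnit h₂.isUnit h₁₂.isUnit (X 0 : MvPolynomial (Fin 2) ℂ) (X 1)
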